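/- Let φ : X → ℝ be a continuous potential on X = 𝒜^(ℤ^d) such that Σ_{n≥1} n^{d−1} var_n φ < ∞. Then every equilibrium state μ ∈ ES(φ) (at β = 1) is fully supported: for every finite Λ ⊂ ℤ^d and every w : Λ → 𝒜, μ({x ∈ X : x|_Λ = w}) > 0. -/

import Mathlib

open MeasureTheory Filter Topology
open scoped ENNReal Classical

namespace Freezing

/-- The configuration space `X = 𝒜^(ℤ^d)`. -/
abbrev Cfg (d : ℕ) (A : Type) : Type := (Fin d → ℤ) → A

section Defs

variable {d : ℕ} {A : Type} [Fintype A] [TopologicalSpace A] [DiscreteTopology A]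
  [MeasurableSpace A] [BorelSpace A]

/-- The shift action: `(σ^n x)_m = x_{n+m}`. -/
def shift (n : Fin d → ℤ) (x : Cfg d A) : Cfg d A := fun m => x (n + m)

/-- Shift-invariance of a measure. -/
def Invariant (μ : Measure (Cfg d A)) : Prop :=
  ∀ n : Fin d → ℤ, Measure.map (shift n) μ = μ

/-- Cylinder set `[w]` for a pattern `w` on `E_n = ([0,n-1] ∩ ℤ)^d`. -/
def cylE (n : ℕ) (w : (Fin d → Fin n) → A) : Set (Cfg d A) :=
  { x | ∀ m : Fin d → Fin n, x (fun i => ((m i : ℕ) : ℤ)) = w m }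

/-- Measure-theoretic entropy `h(μ) = inf_{n ≥ 1} n^{-d} Σ_w (-μ[w] log μ[w])`. -/
noncomputable def entropy (μ : Measure (Cfg d A)) : ℝ :=
  ⨅ n : {n : ℕ // 1 ≤ n},
    ((n.1 : ℝ) ^ d)⁻¹ *
      ∑ w : (Fin d → Fin n.1) → A, Real.negMulLog (μ (cylE n.1 w)).toReal

/-- Pressure `p_φ(β) = sup { h(μ) + β ∫ φ dμ }` over shift-invariant probability measures. -/
noncomputable def pressure (φ : Cfg d A → ℝ) (β : ℝ) : ℝ :=
  sSup { r | ∃ μ : Measure (Cfg d A), IsProbabilityMeasure μ ∧ Invariant μ ∧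
    r = entropy μ + β * ∫ x, φ x ∂μ }

/-- The set of equilibrium states of `βφ`. -/
def ES (φ : Cfg d A → ℝ) (β : ℝ) : Set (Measure (Cfg d A)) :=
  { μ | IsProbabilityMeasure μ ∧ Invariant μ ∧
      entropy μ + β * ∫ x, φ x ∂μ = pressure φ β }

/-- `φ` has a freezing phase transition at `βc`. -/
def FreezingPT (φ : Cfg d A → ℝ) (βc : ℝ) : Prop :=
  (∀ β β' : ℝ, βc < β → βc < β' → ES φ β = ES φ β') ∧
  (∀ β β' : ℝ, β < βc → βc < β' → ES φ β ≠ ES φ β')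

/-- `s_φ = sup { ∫ φ dμ }` over shift-invariant probability measures. -/
noncomputable def sPhi (φ : Cfg d A → ℝ) : ℝ :=
  sSup { r | ∃ μ : Measure (Cfg d A), IsProbabilityMeasure μ ∧ Invariant μ ∧
    r = ∫ x, φ x ∂μ }

/-- The set of maximizing measures of `φ`. -/
def MM (φ : Cfg d A → ℝ) : Set (Measure (Cfg d A)) :=
  { μ | IsProbabilityMeasure μ ∧ Invariant μ ∧ (∫ x, φ x ∂μ) = sPhi φ }

/-- `h_φ = sup { h(η) : η ∈ MM(φ) }`. -/
noncomputable def hPhi (φ : Cfg d A → ℝ) : ℝ :=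
  sSup { r | ∃ μ ∈ MM φ, r = entropy μ }

/-- The zero-temperature accumulation points of `φ`. -/
def ZTA (φ : Cfg d A → ℝ) : Set (Measure (Cfg d A)) :=
  { μ | IsProbabilityMeasure μ ∧ Invariant μ ∧
      ∃ (β : ℕ → ℝ) (μs : ℕ → Measure (Cfg d A)),
        Tendsto β atTop atTop ∧ (∀ k, μs k ∈ ES φ (β k)) ∧
        ∀ f : Cfg d A → ℝ, Continuous f →
          Tendsto (fun k => ∫ x, f x ∂(μs k)) atTop (𝓝 (∫ x, f x ∂μ)) }

/-- A subshift: nonempty, closed, invariant under every shift. -/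
def IsSubshift (X₀ : Set (Cfg d A)) : Prop :=
  X₀.Nonempty ∧ IsClosed X₀ ∧ ∀ n : Fin d → ℤ, ∀ x ∈ X₀, shift n x ∈ X₀

/-- The language `L_{E_n}(X₀)`: patterns on `E_n` appearing at the origin of points of `X₀`. -/
def langE (X₀ : Set (Cfg d A)) (n : ℕ) : Set ((Fin d → Fin n) → A) :=
  { w | ∃ x ∈ X₀, ∀ m : Fin d → Fin n, x (fun i => ((m i : ℕ) : ℤ)) = w m }

/-- Topological entropy `h_top(X₀) = inf_{n ≥ 1} n^{-d} log |L_{E_n}(X₀)|`. -/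
noncomputable def topEnt (X₀ : Set (Cfg d A)) : ℝ :=
  ⨅ n : {n : ℕ // 1 ≤ n}, ((n.1 : ℝ) ^ d)⁻¹ * Real.log ((langE X₀ n.1).ncard)

/-- A measure of maximal entropy on the subshift `X₀`. -/
def IsMME (X₀ : Set (Cfg d A)) (μ : Measure (Cfg d A)) : Prop :=
  IsProbabilityMeasure μ ∧ Invariant μ ∧ μ X₀ = 1 ∧ entropy μ = topEnt X₀

/-- Ergodicity: invariant Borel sets have measure `0` or `1`. -/
def ErgodicInv (μ : Measure (Cfg d A)) : Prop :=
  ∀ s : Set (Cfg d A), MeasurableSet s → (∀ n : Fin d → ℤ, shift n ⁻¹' s = s) →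
    μ s = 0 ∨ μ s = 1

/-- The `n`-th variation `var_n φ`, over pairs agreeing on `B_n = ([-n,n] ∩ ℤ)^d`. -/
noncomputable def varPot (φ : Cfg d A → ℝ) (n : ℕ) : ℝ :=
  sSup { r | ∃ x y : Cfg d A,
    (∀ m : Fin d → ℤ, (∀ i, |m i| ≤ (n : ℤ)) → x m = y m) ∧ r = |φ x - φ y| }

/-- Sup-norm `‖m‖_∞` of a site `m ∈ ℤ^d`. -/
def supNorm (m : Fin d → ℤ) : ℕ := Finset.univ.sup fun i => (m i).natAbs

/-- The metric `dist(x,y) = 2^{-min{‖n‖_∞ : x_n ≠ y_n}}`. -/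
noncomputable def cfgDist (x y : Cfg d A) : ℝ :=
  if x = y then 0
  else (2 : ℝ) ^
    (-((sInf { k : ℕ | ∃ m : Fin d → ℤ, supNorm m = k ∧ x m ≠ y m } : ℕ) : ℤ))

/-- Distance from a point to a subshift. -/
noncomputable def distToSub (X₀ : Set (Cfg d A)) (x : Cfg d A) : ℝ :=
  sInf { r | ∃ y ∈ X₀, r = cfgDist x y }

end Defs


theorem conc {I F : Type*} [Fintype I] [Fintype F] (c : I → ℝ) (hc : ∀ i, 0 ≤ c i)
    (hc1 : ∑ i, c i = 1) (q : I → F → ℝ) (hq : ∀ i y, 0 ≤ q i y) :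
    ∑ i, c i * ∑ y, Real.negMulLog (q i y) ≤ ∑ y, Real.negMulLog (∑ i, c i * q i y) := by
  simp_rw [Finset.mul_sum]
  rw [Finset.sum_comm]
  refine Finset.sum_le_sum fun y _ => ?_
  have := Real.concaveOn_negMulLog.le_map_sum (t := Finset.univ) (w := c) (p := fun i => q i y)
    (fun i _ => hc i) hc1 (fun i _ => hq i y)
  simpa using this

theorem fiber {F : Type*} (s : Finset F) (p : F → ℝ) (hp : ∀ x, 0 ≤ p x) (M : ℕ)
    (hM : s.card ≤ M) :
    ∑ x ∈ s, Real.negMulLog (p x) ≤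
      Real.negMulLog (∑ x ∈ s, p x) + (∑ x ∈ s, p x) * Real.log M := by
  rcases s.eq_empty_or_nonempty with rfl | hs
  · simp
  have hN : (0:ℝ) < s.card := by exact_mod_cast hs.card_pos
  have := Real.concaveOn_negMulLog.le_map_sum (t := s) (w := fun _ => (s.card:ℝ)⁻¹) (p := p)
    (fun i _ => by positivity) (by simp; field_simp) (fun i _ => hp i)
  simp only [smul_eq_mul, ← Finset.mul_sum] at this
  rw [Real.negMulLog_mul] at this
  have h0 : 0 ≤ ∑ x ∈ s, p x := Finset.sum_nonneg fun i _ => hp i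
  have h1 : Real.negMulLog (s.card:ℝ)⁻¹ = (s.card:ℝ)⁻¹ * Real.log s.card := by
    simp [Real.negMulLog]
  rw [h1] at this
  have h2 : ∑ x ∈ s, Real.negMulLog (p x) ≤
      Real.negMulLog (∑ x ∈ s, p x) + (∑ x ∈ s, p x) * Real.log s.card := by
    have h3 : (s.card:ℝ)⁻¹ * ∑ x ∈ s, Real.negMulLog (p x) ≤ (s.card:ℝ)⁻¹ * 
      (Real.negMulLog (∑ x ∈ s, p x) + (∑ x ∈ s, p x) * Real.log s.card) := by linarith
    exact le_of_mul_le_mul_left h3 (by positivity)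
  have h4 : Real.log s.card ≤ Real.log M := Real.log_le_log hN (by exact_mod_cast hM)
  have := mul_le_mul_of_nonneg_left h4 h0
  linarith

theorem keyK1 {F G V : Type*} [Fintype F] [Fintype G] [DecidableEq G] [Fintype V]
    (p : F → ℝ) (hp : ∀ x, 0 ≤ p x) (hp1 : ∑ x, p x = 1)
    (b : V → ℝ) (hb : ∀ v, 0 ≤ b v) (hb1 : ∑ v, b v = 1)
    (Y : V → F → G) (R : G → V) (hR : ∀ v x, p x ≠ 0 → R (Y v x) = v)
    (M : V → ℕ) (hM : ∀ v y, (Finset.univ.filter fun x => Y v x = y).card ≤ M v) :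
    ∑ v, Real.negMulLog (b v) + ∑ x, Real.negMulLog (p x) - ∑ v, b v * Real.log (M v) ≤
      ∑ y, Real.negMulLog (∑ v, b v * ∑ x with Y v x = y, p x) := by
  have hz : ∀ v y, v ≠ R y → ∑ x with Y v x = y, p x = 0 := by
    intro v y hv
    refine Finset.sum_eq_zero fun x hx => ?_
    by_contra h
    have := hR v x h
    simp at hx
    rw [hx] at this
    exact hv this.symm
  have e1 : ∀ y, Real.negMulLog (∑ v, b v * ∑ x with Y v x = y, p x) =
      ∑ v, Real.negMulLog (b v * ∑ x with Y v x = y, p x) := by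
    intro y
    rw [Finset.sum_eq_single (R y), Finset.sum_eq_single (R y)]
    · intro v _ hv; rw [hz v y hv]; simp
    · simp
    · intro v _ hv; rw [hz v y hv]; simp
    · simp
  simp_rw [e1]
  rw [Finset.sum_comm]
  have e2 : ∀ v, Real.negMulLog (b v) + b v * ∑ x, Real.negMulLog (p x) - b v * Real.log (M v) ≤
      ∑ y, Real.negMulLog (b v * ∑ x with Y v x = y, p x) := by
    intro v
    have f1 : ∑ x, p x = ∑ y, ∑ x with Y v x = y, p x := (Finset.sum_fiberwise _ _ _).symm
    have f2 : ∑ x, Real.negMulLog (p x) = ∑ y, ∑ x with Y v x = y, Real.negMulLog (p x) :=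
      (Finset.sum_fiberwise _ _ _).symm
    have f3 := Finset.sum_le_sum (s := Finset.univ) fun y (_ : y ∈ Finset.univ) =>
      fiber (Finset.univ.filter fun x => Y v x = y) p hp (M v) (hM v y)
    rw [← f2, Finset.sum_add_distrib, ← Finset.sum_mul, ← f1, hp1] at f3
    simp_rw [Real.negMulLog_mul]
    rw [Finset.sum_add_distrib, ← Finset.sum_mul, ← Finset.mul_sum, ← f1, hp1]
    have := mul_le_mul_of_nonneg_left f3 (hb v)
    linarith
  have := Finset.sum_le_sum (s := Finset.univ) fun v (_ : v ∈ Finset.univ) => e2 v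
  rw [Finset.sum_sub_distrib, Finset.sum_add_distrib, ← Finset.sum_mul, hb1] at this
  linarith

theorem keyK {F G U V : Type*} [Fintype F] [Fintype G] [DecidableEq G] [Fintype V] [Fintype U]
    (p : F → ℝ) (hp : ∀ x, 0 ≤ p x) (hp1 : ∑ x, p x = 1)
    (b : V → ℝ) (hb : ∀ v, 0 ≤ b v) (hb1 : ∑ v, b v = 1)
    (c : U → ℝ) (hc : ∀ v, 0 ≤ c v) (hc1 : ∑ v, c v = 1)
    (Y : U → V → F → G) (R : U → G → V) (hR : ∀ u v x, p x ≠ 0 → R u (Y u v x) = v)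
    (M : U → V → ℕ) (hM : ∀ u v y, (Finset.univ.filter fun x => Y u v x = y).card ≤ M u v) :
    ∑ v, Real.negMulLog (b v) + ∑ x, Real.negMulLog (p x) -
        ∑ u, ∑ v, c u * b v * Real.log (M u v) ≤
      ∑ y, Real.negMulLog (∑ u, c u * ∑ v, b v * ∑ x with Y u v x = y, p x) := by
  refine le_trans ?_ (conc c hc hc1 _ fun u y => Finset.sum_nonneg fun v _ =>
    mul_nonneg (hb v) (Finset.sum_nonneg fun x _ => hp x))
  have := Finset.sum_le_sum (s := Finset.univ) fun u (_ : u ∈ Finset.univ) =>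
    mul_le_mul_of_nonneg_left (keyK1 p hp hp1 b hb hb1 (Y u) (R u) (hR u) (M u) (hM u)) (hc u)
  refine le_trans (le_of_eq ?_) this
  simp_rw [mul_sub, Finset.sum_sub_distrib, ← Finset.sum_mul, hc1, Finset.mul_sum, mul_assoc, one_mul]

theorem subadd {B D : Type*} [Fintype B] [Fintype D] [DecidableEq B] [DecidableEq D] (q : (B → D) → ℝ) (hq : ∀ y, 0 ≤ q y)
    (hq1 : ∑ y, q y = 1) (r : B → D → ℝ) (hr : ∀ b d, r b d = ∑ y with y b = d, q y) :
    ∑ y, Real.negMulLog (q y) ≤ ∑ b, ∑ d, Real.negMulLog (r b d) := by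
  have hle : ∀ b y, q y ≤ r b (y b) := by
    intro b y
    rw [hr]
    exact Finset.single_le_sum (f := q) (fun i _ => hq i) (by simp)
  have hr0 : ∀ b d, 0 ≤ r b d := fun b d => by rw [hr]; exact Finset.sum_nonneg fun i _ => hq i
  have e1 : ∀ b, ∑ d, Real.negMulLog (r b d) = ∑ y, q y * (- Real.log (r b (y b))) := by
    intro b
    rw [← Finset.sum_fiberwise Finset.univ (fun y : B → D => y b)]
    refine Finset.sum_congr rfl fun d _ => ?_
    rw [Finset.sum_congr rfl (g := fun y => q y * (- Real.log (r b d)))]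
    · rw [← Finset.sum_mul, ← hr, Real.negMulLog]; ring
    · intro y hy
      simp at hy
      rw [hy]
  simp_rw [e1]
  rw [Finset.sum_comm]
  have e2 : ∑ y : B → D, ∏ b, r b (y b) = 1 := by
    have := Finset.prod_univ_sum (fun _ : B => (Finset.univ : Finset D)) r
    rw [Fintype.piFinset_univ] at this
    rw [← this]
    refine Finset.prod_eq_one fun b _ => ?_
    rw [← hq1, ← Finset.sum_fiberwise Finset.univ (fun y : B → D => y b)]
    exact Finset.sum_congr rfl fun d _ => hr b d
  have e3 : ∀ y, Real.negMulLog (q y) ≤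
      ∑ b, q y * (- Real.log (r b (y b))) + (∏ b, r b (y b) - q y) := by
    intro y
    rcases (hq y).eq_or_lt with h | h
    · rw [← h]; simp; exact Finset.prod_nonneg fun b _ => hr0 _ _
    have hpos : ∀ b, 0 < r b (y b) := fun b => h.trans_le (hle b y)
    have hP : 0 < ∏ b, r b (y b) := Finset.prod_pos fun b _ => hpos b
    have := Real.log_le_sub_one_of_pos (div_pos hP h)
    rw [Real.log_div hP.ne' h.ne', Real.log_prod (fun b _ => (hpos b).ne')] at this
    have := mul_le_mul_of_nonneg_left this h.le
    rw [mul_sub, mul_sub, mul_div_cancel₀ _ h.ne'] at this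
    rw [← Finset.mul_sum, Finset.sum_neg_distrib, Real.negMulLog]
    linarith
  have := Finset.sum_le_sum (s := Finset.univ) fun y (_ : y ∈ Finset.univ) => e3 y
  rw [Finset.sum_add_distrib, Finset.sum_sub_distrib, e2, hq1] at this
  linarith

theorem marg {T : Type*} [Fintype T] [DecidableEq T] (β : Bool → ℝ) (h1 : ∑ b, β b = 1) (s : T) (g : Bool → ℝ) :
    ∑ v : T → Bool, (∏ t, β (v t)) * g (v s) = ∑ b, β b * g b := by
  have h : ∀ v : T → Bool, (∏ t, β (v t)) * g (v s) =
      ∏ t, β (v t) * (if t = s then g (v t) else 1) := by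
    intro v
    rw [Finset.prod_mul_distrib]
    simp
  simp_rw [h]
  have := Finset.prod_univ_sum (fun _ : T => (Finset.univ : Finset Bool))
    (fun t b => β b * (if t = s then g b else 1))
  rw [Fintype.piFinset_univ] at this
  rw [← this, Finset.prod_eq_single s]
  · simp
  · intro t _ ht
    simp only [ht, if_false, mul_one]
    exact h1
  · simp

theorem prodsum {T : Type*} [Fintype T] [DecidableEq T] (β : Bool → ℝ) (h1 : ∑ b, β b = 1) :
    ∑ v : T → Bool, (∏ t, β (v t)) = 1 := by
  have := Finset.prod_univ_sum (fun _ : T => (Finset.univ : Finset Bool))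
    (fun _ b => β b)
  rw [Fintype.piFinset_univ] at this
  rw [← this]
  exact Finset.prod_eq_one fun _ _ => h1

theorem bernEnt {T : Type*} [Fintype T] [DecidableEq T] (β : Bool → ℝ) (h1 : ∑ b, β b = 1)
    (h0 : ∀ b, 0 < β b) :
    (Fintype.card T) * Real.negMulLog (β true) ≤
      ∑ v : T → Bool, Real.negMulLog (∏ t, β (v t)) := by
  have e : ∀ v : T → Bool, Real.negMulLog (∏ t, β (v t)) =
      ∑ s, (∏ t, β (v t)) * (- Real.log (β (v s))) := by
    intro v
    rw [Real.negMulLog, Real.log_prod (fun b _ => (h0 _).ne'), ← Finset.mul_sum,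
      Finset.sum_neg_distrib]
    ring
  simp_rw [e]
  rw [Finset.sum_comm]
  simp_rw [marg β h1 _ (fun b => - Real.log (β b))]
  simp only [Finset.sum_const, Finset.card_univ, nsmul_eq_mul]
  refine mul_le_mul_of_nonneg_left ?_ (by positivity)
  simp only [Fintype.sum_bool, Real.negMulLog]
  have h2 : β true + β false = 1 := by simpa using h1
  have : Real.log (β false) ≤ 0 := Real.log_nonpos (h0 _).le (by linarith [h0 true])
  nlinarith [h0 false]

/-- residue of a site relative to the offset. -/
def res {d : ℕ} (k : ℕ) (τ : Fin d → ZMod k) (m : Fin d → ℤ) : Fin d → ℤ :=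
  fun i => ((((m i : ℤ) : ZMod k) - τ i).val : ℤ)

/-- anchor of the tile containing a site. -/
def anc {d : ℕ} (k : ℕ) (τ : Fin d → ZMod k) (m : Fin d → ℤ) : Fin d → ℤ := m - res k τ m

/-- the modified configuration. -/
def Yf {d : ℕ} {A : Type} (k : ℕ) (w : Cfg d A) (τ : Fin d → ZMod k) (x : Cfg d A)
    (ξ : Cfg d Bool) : Cfg d A :=
  fun m => if ξ (anc k τ m) = true then w (res k τ m) else x m

/-- integer vector mod k -/
def modk {d : ℕ} (k : ℕ) (n : Fin d → ℤ) : Fin d → ZMod k := fun i => ((n i : ℤ) : ZMod k)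

theorem res_add {d : ℕ} (k : ℕ) (τ : Fin d → ZMod k) (n m : Fin d → ℤ) :
    res k τ (n + m) = res k (τ - modk k n) m := by
  funext i
  simp only [res, modk, Pi.add_apply, Pi.sub_apply]
  congr 2
  push_cast
  ring

theorem anc_add {d : ℕ} (k : ℕ) (τ : Fin d → ZMod k) (n m : Fin d → ℤ) :
    anc k τ (n + m) = n + anc k (τ - modk k n) m := by
  simp only [anc, res_add]
  abel

theorem shift_Yf {d : ℕ} {A : Type} (k : ℕ) (w : Cfg d A) (τ : Fin d → ZMod k) (x : Cfg d A)
    (ξ : Cfg d Bool) (n : Fin d → ℤ) :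
    shift n (Yf k w τ x ξ) = Yf k w (τ - modk k n) (shift n x) (shift n ξ) := by
  funext m
  change (if ξ (anc k τ (n + m)) = true then w (res k τ (n + m)) else x (n + m)) = _
  rw [res_add, anc_add]
  rfl

theorem measurable_shift {d : ℕ} {A : Type} [MeasurableSpace A] (n : Fin d → ℤ) :
    Measurable (shift n : Cfg d A → Cfg d A) :=
  measurable_pi_lambda _ fun m => measurable_pi_apply (n + m)

theorem measurable_Yf {d : ℕ} {A : Type} [MeasurableSpace A] (k : ℕ) (w : Cfg d A)
    (τ : Fin d → ZMod k) :
    Measurable (fun p : Cfg d A × Cfg d Bool => Yf k w τ p.1 p.2) := by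
  refine measurable_pi_lambda _ fun m => ?_
  refine Measurable.ite ?_ measurable_const ((measurable_pi_apply m).comp measurable_fst)
  exact measurableSet_eq_fun ((measurable_pi_apply (anc k τ m)).comp measurable_snd)
    measurable_const

/-- Bernoulli measure. -/
noncomputable def bern (ε : ℝ) : Measure Bool :=
  ENNReal.ofReal ε • Measure.dirac true + ENNReal.ofReal (1 - ε) • Measure.dirac false

theorem bern_true (ε : ℝ) : bern ε {true} = ENNReal.ofReal ε := by
  simp [bern]

theorem bern_false (ε : ℝ) : bern ε {false} = ENNReal.ofReal (1 - ε) := by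
  simp [bern]

theorem bern_prob {ε : ℝ} (h0 : 0 < ε) (h1 : ε < 1) : IsProbabilityMeasure (bern ε) := by
  constructor
  simp only [bern, Measure.add_apply, Measure.smul_apply, measure_univ, smul_eq_mul, mul_one]
  rw [← ENNReal.ofReal_add h0.le (by linarith)]
  simp

/-- Bernoulli field -/
noncomputable def bfield (d : ℕ) (ε : ℝ) : Measure (Cfg d Bool) :=
  Measure.infinitePi (fun _ : Fin d → ℤ => bern ε)

theorem bfield_prob (d : ℕ) {ε : ℝ} (h0 : 0 < ε) (h1 : ε < 1) :
    IsProbabilityMeasure (bfield d ε) := by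
  have := bern_prob h0 h1
  unfold bfield
  infer_instance

theorem bfield_inv (d : ℕ) {ε : ℝ} (h0 : 0 < ε) (h1 : ε < 1) (n : Fin d → ℤ) :
    Measure.map (shift n) (bfield d ε) = bfield d ε := by
  have := bern_prob h0 h1
  refine Measure.eq_infinitePi (fun _ : Fin d → ℤ => bern ε) fun s t ht => ?_
  rw [Measure.map_apply (measurable_shift n)
    (MeasurableSet.pi s.countable_toSet fun i _ => ht i)]
  have : (shift n) ⁻¹' ((s : Set (Fin d → ℤ)).pi t) =
      (((s.image (fun m => n + m) : Finset (Fin d → ℤ)) : Set (Fin d → ℤ)).pi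
        fun i => t (i - n) : Set (Cfg d Bool)) := by
    ext x
    simp only [Set.mem_preimage, Set.mem_pi, Finset.coe_image, Set.mem_image, shift]
    constructor
    · rintro h _ ⟨j, hj, rfl⟩
      simpa using h j hj
    · intro h i hi
      simpa using h (n + i) ⟨i, hi, rfl⟩
  rw [this, bfield, Measure.infinitePi_pi _ (fun i _ => ht _), Finset.prod_image]
  · simp
  · intro a _ b _ h
    simpa using h

/-- the perturbed measure -/
noncomputable def pert {d : ℕ} {A : Type} [MeasurableSpace A] (k : ℕ) [NeZero k] (w : Cfg d A)
    (ε : ℝ) (μ : Measure (Cfg d A)) : Measure (Cfg d A) :=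
  ((Fintype.card (Fin d → ZMod k) : ℝ≥0∞)⁻¹) •
    ∑ τ : Fin d → ZMod k,
      Measure.map (fun p : Cfg d A × Cfg d Bool => Yf k w τ p.1 p.2) (μ.prod (bfield d ε))

section
variable {d : ℕ} {A : Type} [MeasurableSpace A] (k : ℕ) [NeZero k] (w : Cfg d A)
    {ε : ℝ} (μ : Measure (Cfg d A)) [IsProbabilityMeasure μ]

theorem pert_prob (h0 : 0 < ε) (h1 : ε < 1) : IsProbabilityMeasure (pert k w ε μ) := by
  have := bfield_prob d h0 h1
  constructor
  simp only [pert, Measure.smul_apply, Measure.coe_finsetSum, Finset.sum_apply, smul_eq_mul]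
  have : ∀ τ : Fin d → ZMod k, Measure.map (fun p : Cfg d A × Cfg d Bool => Yf k w τ p.1 p.2)
      (μ.prod (bfield d ε)) Set.univ = 1 := by
    intro τ
    rw [Measure.map_apply (measurable_Yf k w τ) MeasurableSet.univ]
    simp
  simp only [this, Finset.sum_const, Finset.card_univ, nsmul_eq_mul, mul_one]
  refine ENNReal.inv_mul_cancel ?_ (by simp)
  exact_mod_cast Fintype.card_ne_zero

theorem pert_inv (h0 : 0 < ε) (h1 : ε < 1) (hμ : Invariant μ) : Invariant (pert k w ε μ) := by
  have := bfield_prob d h0 h1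
  intro n
  simp only [pert]
  rw [Measure.map_smul, Measure.map_finset_sum (measurable_shift n).aemeasurable]
  congr 1
  refine Fintype.sum_equiv (Equiv.subRight (modk k n)) _ _ fun τ => ?_
  rw [Measure.map_map (measurable_shift n) (measurable_Yf k w τ)]
  have e : shift n ∘ (fun p : Cfg d A × Cfg d Bool => Yf k w τ p.1 p.2) =
      (fun p : Cfg d A × Cfg d Bool => Yf k w (τ - modk k n) p.1 p.2) ∘
        Prod.map (shift n) (shift n) := by
    funext p
    simp [shift_Yf]
  rw [e, ← Measure.map_map (measurable_Yf k w _)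
    ((measurable_shift n).prodMap (measurable_shift n)),
    ← Measure.map_prod_map _ _ (measurable_shift n) (measurable_shift n), hμ n,
    bfield_inv d h0 h1 n]
  rfl

theorem pert_real (h0 : 0 < ε) (h1 : ε < 1) (S : Set (Cfg d A)) (hS : MeasurableSet S) :
    (pert k w ε μ S).toReal = ∑ τ : Fin d → ZMod k, ((Fintype.card (Fin d → ZMod k) : ℝ)⁻¹) *
      ((μ.prod (bfield d ε)) {p | Yf k w τ p.1 p.2 ∈ S}).toReal := by
  have := bfield_prob d h0 h1
  simp only [pert, Measure.smul_apply, Measure.coe_finsetSum, Finset.sum_apply, smul_eq_mul]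
  rw [ENNReal.toReal_mul, ENNReal.toReal_sum, Finset.mul_sum]
  · refine Finset.sum_congr rfl fun τ _ => ?_
    rw [Measure.map_apply (measurable_Yf k w τ) hS]
    simp
    left
    rfl
  · intro τ _
    rw [Measure.map_apply (measurable_Yf k w τ) hS]
    exact measure_ne_top _ _

theorem pert_integral (h0 : 0 < ε) (h1 : ε < 1) (φ : Cfg d A → ℝ) (hφ : Measurable φ) (C : ℝ)
    (hC : ∀ x, |φ x| ≤ C) :
    ∫ x, φ x ∂(pert k w ε μ) = ∑ τ : Fin d → ZMod k, ((Fintype.card (Fin d → ZMod k) : ℝ)⁻¹) *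
      ∫ p, φ (Yf k w τ p.1 p.2) ∂(μ.prod (bfield d ε)) := by
  have := bfield_prob d h0 h1
  simp only [pert]
  rw [integral_smul_measure, integral_finsetSum_measure, Finset.smul_sum]
  · refine Finset.sum_congr rfl fun τ _ => ?_
    rw [integral_map (measurable_Yf k w τ).aemeasurable hφ.aestronglyMeasurable]
    simp
  · intro τ _
    have : IsProbabilityMeasure (Measure.map (fun p : Cfg d A × Cfg d Bool => Yf k w τ p.1 p.2)
      (μ.prod (bfield d ε))) := Measure.isProbabilityMeasure_map (measurable_Yf k w τ).aemeasurable
    exact Integrable.of_bound hφ.aestronglyMeasurable C (Eventually.of_forall hC)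

end

/-- embedding of box sites -/
def site {d n : ℕ} (e : Fin d → Fin n) : Fin d → ℤ := fun i => ((e i : ℕ) : ℤ)

theorem res_bd {d : ℕ} (k : ℕ) [NeZero k] (τ : Fin d → ZMod k) (m : Fin d → ℤ) (i : Fin d) :
    0 ≤ res k τ m i ∧ res k τ m i < k := by
  unfold res
  exact ⟨by positivity, by exact_mod_cast ZMod.val_lt _⟩

/-- anchors of full tiles -/
def tz {d m : ℕ} (k : ℕ) (τ : Fin d → ZMod k) (z : Fin d → Fin m) : Fin d → ℤ :=
  fun i => ((τ i).val : ℤ) + k * ((z i : ℕ) : ℤ)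

theorem tz_inj {d m : ℕ} (k : ℕ) [NeZero k] (τ : Fin d → ZMod k) :
    Function.Injective (tz k τ : (Fin d → Fin m) → _) := by
  intro z z' h
  funext i
  have := congrFun h i
  simp only [tz, add_right_inj] at this
  have hk : (k : ℤ) ≠ 0 := by exact_mod_cast NeZero.ne k
  have := mul_left_cancel₀ hk this
  exact Fin.ext (by exact_mod_cast this)

theorem res_tz {d m : ℕ} (k : ℕ) [NeZero k] (τ : Fin d → ZMod k) (z : Fin d → Fin m)
    (r : Fin d → ℤ) (hr : ∀ i, 0 ≤ r i ∧ r i < k) : res k τ (tz k τ z + r) = r := by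
  funext i
  simp only [res, tz, Pi.add_apply]
  push_cast
  have e : (((τ i).val : ZMod k) + (k : ZMod k) * ((z i : ℕ) : ZMod k) + (r i : ZMod k) - τ i)
    = (r i : ZMod k) := by
    simp
  rw [e]
  obtain ⟨a, ha⟩ := Int.eq_ofNat_of_zero_le (hr i).1
  have h2 := (hr i).2
  rw [ha] at h2 ⊢
  have h3 : a < k := by exact_mod_cast h2
  push_cast
  rw [ZMod.val_natCast, Nat.mod_eq_of_lt h3]

theorem tz_box {d m : ℕ} (k : ℕ) [NeZero k] (τ : Fin d → ZMod k) (z : Fin d → Fin m)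
    (r : Fin d → ℤ) (hr : ∀ i, 0 ≤ r i ∧ r i < k) (n : ℕ) (hn : n = 2 * k * m) :
    ∃ e : Fin d → Fin n, site e = tz k τ z + r := by
  subst hn
  have h : ∀ i, 0 ≤ (tz k τ z + r) i ∧ (tz k τ z + r) i < ((2 * k * m : ℕ) : ℤ) := by
    intro i
    have h1 := hr i
    have h2 : ((τ i).val : ℤ) < k := by exact_mod_cast ZMod.val_lt _
    have h3 : ((z i : ℕ) : ℤ) + 1 ≤ m := by exact_mod_cast (z i).2
    have h4 : (0 : ℤ) ≤ ((z i : ℕ) : ℤ) := by positivity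
    have h5 : (0 : ℤ) ≤ ((τ i).val : ℤ) := by positivity
    simp only [tz, Pi.add_apply]
    push_cast
    have hk : (0 : ℤ) ≤ k := by positivity
    constructor
    · nlinarith
    · nlinarith
  refine ⟨fun i => ⟨((tz k τ z + r) i).toNat, ?_⟩, ?_⟩
  · have := h i
    omega
  · funext i
    simp only [site]
    exact Int.toNat_of_nonneg (h i).1

theorem measurable_cylE {d : ℕ} {A : Type} [Fintype A] [MeasurableSpace A]
    [MeasurableSingletonClass A] (n : ℕ)
    (x : (Fin d → Fin n) → A) : MeasurableSet (cylE n x) := by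
  have : cylE n x = ⋂ e : Fin d → Fin n, (fun X : Cfg d A => X (site e)) ⁻¹' {x e} := by
    ext X
    simp only [Set.mem_iInter, Set.mem_preimage, Set.mem_singleton_iff]
    rfl
  rw [this]
  exact MeasurableSet.iInter fun e => measurable_pi_apply _ (measurableSet_singleton _)

section
variable {d : ℕ} {A : Type} [Fintype A] [MeasurableSpace A] [MeasurableSingletonClass A]

theorem cyl_sum (n : ℕ) (μ : Measure (Cfg d A)) [IsProbabilityMeasure μ] :
    ∑ x, (μ (cylE n x)).toReal = 1 := by
  rw [← ENNReal.toReal_sum (fun _ _ => measure_ne_top _ _)]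
  have h := sum_measure_preimage_singleton (μ := μ)
    (f := fun (X : Cfg d A) (e : Fin d → Fin n) => X (site e)) Finset.univ
    (fun y _ => by
      have : (fun (X : Cfg d A) (e : Fin d → Fin n) => X (site e)) ⁻¹' {y} = cylE n y := by
        ext X; simp only [Set.mem_preimage, Set.mem_singleton_iff, funext_iff]; rfl
      rw [this]; exact measurable_cylE n y)
  have h2 : ∀ y, (fun (X : Cfg d A) (e : Fin d → Fin n) => X (site e)) ⁻¹' {y} = cylE n y := by
    intro y; ext X; simp only [Set.mem_preimage, Set.mem_singleton_iff, funext_iff]; rfl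
  simp only [h2, Finset.coe_univ, Set.preimage_univ, measure_univ] at h
  rw [h]; simp

/-- finite version of the modification -/
def YW (k : ℕ) (w : Cfg d A) (τ : Fin d → ZMod k) (n : ℕ) (W : Finset (Fin d → ℤ))
    (hW : ∀ e : Fin d → Fin n, anc k τ (site e) ∈ W) (ξ : W → Bool) (x : (Fin d → Fin n) → A) :
    (Fin d → Fin n) → A :=
  fun e => if ξ ⟨anc k τ (site e), hW e⟩ = true then w (res k τ (site e)) else x e

theorem Y_law (k : ℕ) (w : Cfg d A) (τ : Fin d → ZMod k) (n : ℕ) (W : Finset (Fin d → ℤ))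
    (hW : ∀ e : Fin d → Fin n, anc k τ (site e) ∈ W) {ε : ℝ} (h0 : 0 < ε) (h1 : ε < 1)
    (μ : Measure (Cfg d A)) [IsProbabilityMeasure μ] (y : (Fin d → Fin n) → A) :
    ((μ.prod (bfield d ε)) {p | Yf k w τ p.1 p.2 ∈ cylE n y}).toReal =
      ∑ ξ : W → Bool, (∏ t, (bern ε {ξ t}).toReal) *
        ∑ x with YW k w τ n W hW ξ x = y, (μ (cylE n x)).toReal := by
  have := bfield_prob d h0 h1
  have := bern_prob h0 h1
  let f : Cfg d A × Cfg d Bool → (W → Bool) × ((Fin d → Fin n) → A) :=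
    fun p => (fun t => p.2 t, fun e => p.1 (site e))
  have hf : ∀ z, f ⁻¹' {z} = cylE n z.2 ×ˢ (W : Set (Fin d → ℤ)).pi
      (fun t => if h : t ∈ W then {z.1 ⟨t, h⟩} else Set.univ) := by
    rintro ⟨ξ, x⟩
    ext ⟨X, Ξ⟩
    simp only [f, Set.mem_preimage, Set.mem_singleton_iff, Prod.mk.injEq, Set.mem_prod, cylE,
      Set.mem_ofPred_eq, Set.mem_pi, funext_iff]
    rw [and_comm]
    refine and_congr Iff.rfl ?_
    constructor
    · intro h t ht
      have ht' : t ∈ W := ht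
      simp only [ht', dif_pos]
      exact h ⟨t, ht⟩
    · intro h t
      have := h t t.2
      simpa using this
  have hmeas : ∀ z, MeasurableSet (f ⁻¹' {z}) := by
    intro z
    rw [hf]
    refine (measurable_cylE n _).prod (MeasurableSet.pi W.countable_toSet fun t _ => ?_)
    exact Set.Finite.measurableSet (Set.toFinite _)
  have hval : ∀ z, ((μ.prod (bfield d ε)) (f ⁻¹' {z})).toReal =
      (∏ t, (bern ε {z.1 t}).toReal) * (μ (cylE n z.2)).toReal := by
    intro z
    rw [hf, Measure.prod_prod, bfield, Measure.infinitePi_pi, ENNReal.toReal_mul, mul_comm,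
      ENNReal.toReal_prod, ← Finset.prod_coe_sort]
    · congr 1
      refine Finset.prod_congr rfl fun t _ => ?_
      simp
    · intro t _
      exact Set.Finite.measurableSet (Set.toFinite _)
  have hset : {p : Cfg d A × Cfg d Bool | Yf k w τ p.1 p.2 ∈ cylE n y} =
      f ⁻¹' ((Finset.univ.filter fun z : (W → Bool) × ((Fin d → Fin n) → A) =>
        YW k w τ n W hW z.1 z.2 = y : Finset _) : Set _) := by
    ext ⟨X, Ξ⟩
    simp only [f, Set.mem_preimage, Finset.coe_filter, Finset.mem_univ, true_and,
      Set.mem_ofPred_eq, funext_iff]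
    rfl
  rw [hset, ← sum_measure_preimage_singleton _ (fun z _ => hmeas z),
    ENNReal.toReal_sum (fun _ _ => measure_ne_top _ _)]
  simp_rw [hval]
  rw [Finset.sum_filter, Fintype.sum_prod_type]
  refine Finset.sum_congr rfl fun ξ _ => ?_
  rw [Finset.sum_filter, Finset.mul_sum]
  refine Finset.sum_congr rfl fun x _ => ?_
  split_ifs <;> simp

theorem YW_card (k : ℕ) (w : Cfg d A) (τ : Fin d → ZMod k) (n : ℕ) (W : Finset (Fin d → ℤ))
    (hW : ∀ e : Fin d → Fin n, anc k τ (site e) ∈ W) (ξ : W → Bool) (y : (Fin d → Fin n) → A) :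
    (Finset.univ.filter fun x => YW k w τ n W hW ξ x = y).card ≤
      Fintype.card A ^
        (Finset.univ.filter fun e => ξ ⟨anc k τ (site e), hW e⟩ = true).card := by
  have := Finset.card_le_card_of_injOn
    (s := Finset.univ.filter fun x => YW k w τ n W hW ξ x = y)
    (t := (Finset.univ : Finset ({e // ξ ⟨anc k τ (site e), hW e⟩ = true} → A)))
    (fun x e => x e.1) (fun _ _ => by simp) (by
      intro x hx x' hx' h
      simp only [Finset.coe_filter, Finset.mem_univ, true_and, Set.mem_ofPred_eq] at hx hx'
      funext e
      by_cases he : ξ ⟨anc k τ (site e), hW e⟩ = true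
      · exact congrFun h ⟨e, he⟩
      · have h1 := congrFun (hx.trans hx'.symm) e
        simpa [YW, he] using h1)
  refine this.trans (le_of_eq ?_)
  rw [Finset.card_univ, Fintype.card_fun, Fintype.card_subtype]

end

section
variable {d : ℕ} {A : Type} [Fintype A] [MeasurableSpace A] [MeasurableSingletonClass A]

theorem bern_sum {ε : ℝ} (h0 : 0 < ε) (h1 : ε < 1) : ∑ b, (bern ε {b}).toReal = 1 := by
  rw [Fintype.sum_bool, bern_true, bern_false, ENNReal.toReal_ofReal h0.le,
    ENNReal.toReal_ofReal (by linarith)]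
  ring

theorem bern_pos {ε : ℝ} (h0 : 0 < ε) (h1 : ε < 1) (b : Bool) : 0 < (bern ε {b}).toReal := by
  cases b
  · rw [bern_false, ENNReal.toReal_ofReal (by linarith)]; linarith
  · rw [bern_true, ENNReal.toReal_ofReal h0.le]; exact h0

set_option maxHeartbeats 400000 in
theorem block (k : ℕ) [NeZero k] (w : Cfg d A) (τ : Fin d → ZMod k) (m n : ℕ) (hn : n = 2 * k * m)
    {ε : ℝ} (h0 : 0 < ε) (h1 : ε < 1)
    (μ : Measure (Cfg d A)) [IsProbabilityMeasure μ]
    (hforb : ∀ a : Fin d → ℤ,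
      μ {x | ∀ r : Fin d → ℤ, (∀ i, 0 ≤ r i ∧ r i < k) → x (a + r) = w r} = 0) :
    (m : ℝ) ^ d * Real.negMulLog ε + ∑ x, Real.negMulLog (μ (cylE n x)).toReal
      - ε * (n : ℝ) ^ d * Real.log (Fintype.card A) ≤
    ∑ y, Real.negMulLog
      ((μ.prod (bfield d ε)) {p | Yf k w τ p.1 p.2 ∈ cylE n y}).toReal := by
  let W : Finset (Fin d → ℤ) := Finset.univ.image fun e : Fin d → Fin n => anc k τ (site e)
  have hW : ∀ e : Fin d → Fin n, anc k τ (site e) ∈ W := fun e =>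
    Finset.mem_image_of_mem _ (Finset.mem_univ e)
  let P : W → Prop := fun t => ∃ z : Fin d → Fin m, tz k τ z = t
  let bw : Bool → ℝ := fun b => (bern ε {b}).toReal
  have hb1 : ∑ b, bw b = 1 := bern_sum h0 h1
  have hb0 : ∀ b, 0 < bw b := bern_pos h0 h1
  let eqv := Equiv.piEquivPiSubtypeProd P (fun _ => Bool)
  let p : ((Fin d → Fin n) → A) → ℝ := fun x => (μ (cylE n x)).toReal
  let I : (W → Bool) → Finset (Fin d → Fin n) := fun ξ =>
    Finset.univ.filter fun e => ξ ⟨anc k τ (site e), hW e⟩ = true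
  have hprod : ∀ (v : {t // P t} → Bool) (u : {t // ¬ P t} → Bool),
      ∏ t, bw (eqv.symm (v, u) t) = (∏ t, bw (u t)) * ∏ t, bw (v t) := by
    intro v u
    rw [← Fintype.prod_subtype_mul_prod_subtype P, mul_comm]
    congr 1
    · refine Finset.prod_congr rfl fun t _ => ?_
      simp [eqv, Equiv.piEquivPiSubtypeProd, t.2]
    · refine Finset.prod_congr rfl fun t _ => ?_
      simp [eqv, Equiv.piEquivPiSubtypeProd, t.2]
  have hsum : ∀ g : (W → Bool) → ℝ, ∑ ξ, (∏ t, bw (ξ t)) * g ξ =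
      ∑ u : {t // ¬ P t} → Bool, (∏ t, bw (u t)) *
        ∑ v : {t // P t} → Bool, (∏ t, bw (v t)) * g (eqv.symm (v, u)) := by
    intro g
    rw [← Equiv.sum_comp eqv.symm, Fintype.sum_prod_type_right]
    refine Finset.sum_congr rfl fun u _ => ?_
    rw [Finset.mul_sum]
    refine Finset.sum_congr rfl fun v _ => ?_
    rw [hprod]
    ring
  let R : ({t // ¬ P t} → Bool) → ((Fin d → Fin n) → A) → ({t // P t} → Bool) := fun _ y t =>
    decide (∀ e, anc k τ (site e) = t.1.1 → y e = w (res k τ (site e)))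
  have hR : ∀ u v x, p x ≠ 0 → R u (YW k w τ n W hW (eqv.symm (v, u)) x) = v := by
    intro u v x hx
    funext t
    have hv : eqv.symm (v, u) t.1 = v t := by
      simp [eqv, Equiv.piEquivPiSubtypeProd, t.2]
    have hv' : ∀ e (he : anc k τ (site e) = t.1.1),
        eqv.symm (v, u) ⟨anc k τ (site e), hW e⟩ = v t := by
      intro e he
      have hs : (⟨anc k τ (site e), hW e⟩ : W) = t.1 := Subtype.ext he
      rw [hs]
      exact hv
    cases hvt : v t
    · simp only [R, decide_eq_false_iff_not]
      intro hall
      apply hx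
      obtain ⟨z, hz⟩ := t.2
      have : μ (cylE n x) ≤ 0 := by
        rw [← hforb t.1.1]
        refine measure_mono fun X hX r hr => ?_
        obtain ⟨e, he⟩ := tz_box (m := m) k τ z r hr n hn
        have hres : res k τ (site e) = r := by rw [he]; exact res_tz k τ z r hr
        have hanc : anc k τ (site e) = t.1.1 := by
          rw [anc, hres, he, ← hz]; abel
        have h2 := hall e hanc
        rw [hres] at h2
        simp only [YW, hv' e hanc, hvt] at h2
        have h3 : X (site e) = x e := hX e
        rw [← hz, ← he, h3]
        simpa using h2
      simp [p, le_antisymm this bot_le]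
    · simp only [R, decide_eq_true_eq]
      intro e he
      simp [YW, hv' e he, hvt]
  have key := keyK p (fun x => ENNReal.toReal_nonneg) (cyl_sum n μ)
    (fun v : {t // P t} → Bool => ∏ t, bw (v t))
    (fun v => Finset.prod_nonneg fun t _ => (hb0 _).le) (prodsum bw hb1)
    (fun u : {t // ¬ P t} → Bool => ∏ t, bw (u t))
    (fun v => Finset.prod_nonneg fun t _ => (hb0 _).le) (prodsum bw hb1)
    (fun u v x => YW k w τ n W hW (eqv.symm (v, u)) x) R hR
    (fun u v => Fintype.card A ^ (I (eqv.symm (v, u))).card)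
    (fun u v y => YW_card k w τ n W hW _ y)
  have hlaw : ∀ y, ((μ.prod (bfield d ε)) {p | Yf k w τ p.1 p.2 ∈ cylE n y}).toReal =
      ∑ u : {t // ¬ P t} → Bool, (∏ t, bw (u t)) *
        ∑ v : {t // P t} → Bool, (∏ t, bw (v t)) *
          ∑ x with YW k w τ n W hW (eqv.symm (v, u)) x = y, p x := by
    intro y
    rw [Y_law k w τ n W hW h0 h1 μ y]
    exact hsum fun ξ => ∑ x with YW k w τ n W hW ξ x = y, p x
  simp_rw [hlaw]
  refine le_trans ?_ key
  have hI : ∑ u : {t // ¬ P t} → Bool, ∑ v : {t // P t} → Bool, (∏ t, bw (u t)) *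
      (∏ t, bw (v t)) * Real.log ((Fintype.card A ^ (I (eqv.symm (v, u))).card : ℕ) : ℝ) =
      ε * (n : ℝ) ^ d * Real.log (Fintype.card A) := by
    have a1 := hsum fun ξ => ((I ξ).card : ℝ) * Real.log (Fintype.card A)
    have a2 : ∑ u : {t // ¬ P t} → Bool, ∑ v : {t // P t} → Bool, (∏ t, bw (u t)) *
      (∏ t, bw (v t)) * Real.log ((Fintype.card A ^ (I (eqv.symm (v, u))).card : ℕ) : ℝ) =
      ∑ ξ : W → Bool, (∏ t, bw (ξ t)) * (((I ξ).card : ℝ) * Real.log (Fintype.card A)) := by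
      rw [a1]
      refine Finset.sum_congr rfl fun u _ => ?_
      rw [Finset.mul_sum]
      refine Finset.sum_congr rfl fun v _ => ?_
      push_cast
      rw [Real.log_pow]
      ring
    rw [a2]
    simp_rw [← mul_assoc]
    rw [← Finset.sum_mul]
    congr 1
    have a3 : ∀ ξ : W → Bool, ((I ξ).card : ℝ) =
        ∑ e : Fin d → Fin n, (fun b : Bool => if b = true then (1:ℝ) else 0)
          (ξ ⟨anc k τ (site e), hW e⟩) := by
      intro ξ
      simp [I]
    simp_rw [a3, Finset.mul_sum]
    rw [Finset.sum_comm]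
    have a4 := fun e : Fin d → Fin n => marg bw hb1 (⟨anc k τ (site e), hW e⟩ : W)
      (fun b : Bool => if b = true then (1:ℝ) else 0)
    rw [Finset.sum_congr rfl fun e _ => a4 e]
    simp [bw, bern_true, ENNReal.toReal_ofReal h0.le]
    ring
  rw [hI]
  have hB := bernEnt (T := {t // P t}) bw hb1 hb0
  have hbt : bw true = ε := by simp [bw, bern_true, ENNReal.toReal_ofReal h0.le]
  rw [hbt] at hB
  have hcard : (m : ℝ) ^ d ≤ Fintype.card {t // P t} := by
    have hmem : ∀ z : Fin d → Fin m, tz k τ z ∈ W := by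
      intro z
      have hr : ∀ i : Fin d, (0:ℤ) ≤ (0 : Fin d → ℤ) i ∧ (0 : Fin d → ℤ) i < k := by
        intro i
        simpa using Nat.pos_of_ne_zero (NeZero.ne k)
      obtain ⟨e, he⟩ := tz_box (m := m) k τ z 0 hr n hn
      have hres : res k τ (site e) = 0 := by rw [he]; exact res_tz k τ z 0 hr
      have := hW e
      rw [anc, hres, he] at this
      simpa using this
    have := Fintype.card_le_of_injective
      (fun z : Fin d → Fin m => (⟨⟨tz k τ z, hmem z⟩, z, rfl⟩ : {t // P t}))
      (fun z z' h => tz_inj k τ (by simpa using h))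
    rw [Fintype.card_fun, Fintype.card_fin, Fintype.card_fin] at this
    exact_mod_cast this
  have hnn : 0 ≤ Real.negMulLog ε := Real.negMulLog_nonneg h0.le h1.le
  have := mul_le_mul_of_nonneg_right hcard hnn
  linarith

theorem pert_block (k : ℕ) [NeZero k] (w : Cfg d A) (m : ℕ)
    {ε : ℝ} (h0 : 0 < ε) (h1 : ε < 1)
    (μ : Measure (Cfg d A)) [IsProbabilityMeasure μ]
    (hforb : ∀ a : Fin d → ℤ,
      μ {x | ∀ r : Fin d → ℤ, (∀ i, 0 ≤ r i ∧ r i < k) → x (a + r) = w r} = 0) :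
    (m : ℝ) ^ d * Real.negMulLog ε + ∑ x, Real.negMulLog (μ (cylE (2 * k * m) x)).toReal
      - ε * ((2 * k * m : ℕ) : ℝ) ^ d * Real.log (Fintype.card A) ≤
    ∑ y, Real.negMulLog (pert k w ε μ (cylE (2 * k * m) y)).toReal := by
  have hK : (Fintype.card (Fin d → ZMod k) : ℝ) ≠ 0 := by exact_mod_cast Fintype.card_ne_zero
  have hK1 : ∑ _τ : Fin d → ZMod k, (Fintype.card (Fin d → ZMod k) : ℝ)⁻¹ = 1 := by
    rw [Finset.sum_const, Finset.card_univ, nsmul_eq_mul, mul_inv_cancel₀ hK]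
  simp_rw [pert_real k w μ h0 h1 _ (measurable_cylE _ _)]
  refine le_trans ?_ (conc _ (fun _ => by positivity) hK1 _ fun τ y => ENNReal.toReal_nonneg)
  have := Finset.sum_le_sum (s := Finset.univ) fun τ (_ : τ ∈ Finset.univ) =>
    mul_le_mul_of_nonneg_left (block k w τ m _ rfl h0 h1 μ hforb)
      (show 0 ≤ (Fintype.card (Fin d → ZMod k) : ℝ)⁻¹ by positivity)
  refine le_trans (le_of_eq ?_) this
  rw [← Finset.sum_mul, hK1, one_mul]

theorem ent_subadd (j m : ℕ) (μ : Measure (Cfg d A)) [IsProbabilityMeasure μ]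
    (hμ : Invariant μ) :
    ∑ y, Real.negMulLog (μ (cylE (j * m) y)).toReal ≤
      (j : ℝ) ^ d * ∑ y, Real.negMulLog (μ (cylE m y)).toReal := by
  let e0 : (Fin d → Fin j) × (Fin d → Fin m) ≃ (Fin d → Fin (j * m)) :=
    (Equiv.arrowProdEquivProdArrow (Fin d) (fun _ => Fin j) (fun _ => Fin m)).symm.trans
      (Equiv.arrowCongr (Equiv.refl _) finProdFinEquiv)
  let e1 : ((Fin d → Fin (j * m)) → A) ≃ ((Fin d → Fin j) → (Fin d → Fin m) → A) :=
    (Equiv.arrowCongr e0.symm (Equiv.refl A)).trans (Equiv.curry _ _ _)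
  let q : ((Fin d → Fin j) → (Fin d → Fin m) → A) → ℝ :=
    fun y => (μ (cylE (j * m) (e1.symm y))).toReal
  have hsite : ∀ b c, site (e0 (b, c)) = (fun i => (m : ℤ) * ((b i : ℕ) : ℤ)) + site c := by
    intro b c
    funext i
    simp [e0, site, Equiv.arrowProdEquivProdArrow, finProdFinEquiv]
    ring
  have he1 : ∀ y b c, e1.symm y (e0 (b, c)) = y b c := by
    intro y b c
    simp [e1]
  have hcyl : ∀ y, cylE (j * m) (e1.symm y) =
      (fun (X : Cfg d A) (b : Fin d → Fin j) (c : Fin d → Fin m) => X (site (e0 (b, c)))) ⁻¹' {y} := by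
    intro y
    ext X
    simp only [Set.mem_preimage, Set.mem_singleton_iff, funext_iff]
    constructor
    · intro h b c
      have := h (e0 (b, c))
      rw [he1] at this
      exact this
    · intro h e
      obtain ⟨⟨b, c⟩, rfl⟩ := e0.surjective e
      rw [he1]
      exact h b c
  have hmeas : ∀ y, MeasurableSet ((fun (X : Cfg d A) (b : Fin d → Fin j)
      (c : Fin d → Fin m) => X (site (e0 (b, c)))) ⁻¹' {y}) := by
    intro y
    have := measurable_cylE (j * m) (e1.symm y)
    rwa [hcyl y] at this
  have hq1 : ∑ y, q y = 1 := by
    rw [← cyl_sum (j * m) μ]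
    exact Equiv.sum_comp e1.symm fun y => (μ (cylE (j * m) y)).toReal
  have key := subadd q (fun y => ENNReal.toReal_nonneg) hq1
    (fun _ c => (μ (cylE m c)).toReal) (by
      intro b c
      simp only [q]
      rw [← ENNReal.toReal_sum (fun _ _ => measure_ne_top _ _)]
      congr 1
      simp_rw [hcyl]
      rw [sum_measure_preimage_singleton _ (fun y _ => hmeas y)]
      rw [← hμ (fun i => (m : ℤ) * ((b i : ℕ) : ℤ)),
        Measure.map_apply (measurable_shift _) (measurable_cylE m c), hμ]
      congr 1
      ext X
      simp only [Set.mem_preimage, Finset.coe_filter, Finset.mem_univ, true_and,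
        Set.mem_ofPred_eq, hsite, funext_iff]
      rfl)
  have e2 : ∑ y, Real.negMulLog (q y) = ∑ y, Real.negMulLog (μ (cylE (j * m) y)).toReal :=
    Equiv.sum_comp e1.symm fun y => Real.negMulLog (μ (cylE (j * m) y)).toReal
  rw [e2] at key
  refine key.trans (le_of_eq ?_)
  simp

end

theorem supNorm_le {d : ℕ} (m : Fin d → ℤ) (r : ℕ) :
    supNorm m ≤ r ↔ m ∈ Finset.Icc (fun _ : Fin d => -(r : ℤ)) (fun _ => (r : ℤ)) := by
  simp only [supNorm, Finset.sup_le_iff, Finset.mem_univ, true_imp_iff, Finset.mem_Icc, Pi.le_def]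
  rw [← forall_and]
  refine forall_congr' fun i => ?_
  omega

theorem box_card {d : ℕ} (r : ℕ) :
    (Finset.Icc (fun _ : Fin d => -(r : ℤ)) (fun _ => (r : ℤ))).card = (2 * r + 1) ^ d := by
  rw [Pi.card_Icc]
  simp only [Int.card_Icc, Finset.prod_const, Finset.card_univ, Fintype.card_fin]
  congr 1
  omega

/-- sphere in sup norm -/
noncomputable def sph (d r : ℕ) : Finset (Fin d → ℤ) :=
  (Finset.Icc (fun _ : Fin d => -(r : ℤ)) (fun _ => (r : ℤ))).filter fun m => supNorm m = r

theorem sph_eq {d : ℕ} (r : ℕ) : (supNorm ⁻¹' {r} : Set (Fin d → ℤ)) = (sph d r : Set _) := by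
  ext m
  simp only [Set.mem_preimage, Set.mem_singleton_iff, sph, Finset.coe_filter, ← supNorm_le,
    Set.mem_ofPred_eq]
  constructor
  · intro h; exact ⟨h.le, h⟩
  · intro h; exact h.2

theorem sph_card (d s : ℕ) :
    ((sph d (s + 1)).card : ℝ) ≤ 2 * d * 3 ^ (d - 1) * ((s + 1 : ℕ) : ℝ) ^ (d - 1) := by
  have h1 : sph d (s + 1) ⊆
      (Finset.Icc (fun _ : Fin d => -((s + 1 : ℕ) : ℤ)) (fun _ => ((s + 1 : ℕ) : ℤ))) \
        (Finset.Icc (fun _ : Fin d => -(s : ℤ)) (fun _ => (s : ℤ))) := by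
    intro m hm
    simp only [sph, Finset.mem_filter] at hm
    rw [Finset.mem_sdiff, ← supNorm_le, ← supNorm_le]
    omega
  have h2 := Finset.card_le_card h1
  rw [Finset.card_sdiff_of_subset, box_card, box_card] at h2
  · have h3 : (2 * s + 1) ^ d ≤ (2 * (s + 1) + 1) ^ d := Nat.pow_le_pow_left (by omega) d
    have h4 : ((sph d (s + 1)).card : ℝ) ≤ (2 * (s + 1) + 1 : ℝ) ^ d - (2 * s + 1 : ℝ) ^ d := by
      have : (sph d (s + 1)).card + (2 * s + 1) ^ d ≤ (2 * (s + 1) + 1) ^ d := by omega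
      have : ((sph d (s + 1)).card : ℝ) + (2 * s + 1 : ℝ) ^ d ≤ (2 * (s + 1) + 1 : ℝ) ^ d := by
        exact_mod_cast this
      linarith
    refine h4.trans ((le_abs_self _).trans ((abs_pow_sub_pow_le _ _ _).trans ?_))
    have e1 : |(2 * (s + 1) + 1 : ℝ) - (2 * s + 1)| = 2 := by
      rw [show (2 * (s + 1) + 1 : ℝ) - (2 * s + 1) = 2 by ring]; norm_num
    have e2 : max |(2 * (s + 1) + 1 : ℝ)| |(2 * s + 1 : ℝ)| ≤ 3 * ((s + 1 : ℕ) : ℝ) := by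
      have hs : (0:ℝ) ≤ s := by positivity
      rw [abs_of_nonneg (by positivity), abs_of_nonneg (by positivity)]
      push_cast
      apply max_le <;> linarith
    rw [e1, mul_assoc (2 * (d:ℝ)), ← mul_pow]
    refine mul_le_mul_of_nonneg_left ?_ (by positivity)
    exact pow_le_pow_left₀ (by positivity) e2 _
  · intro m hm
    rw [← supNorm_le] at hm ⊢
    omega

section
variable {d : ℕ} {A : Type} [Fintype A] [TopologicalSpace A] [DiscreteTopology A]

theorem varPot_le (φ : Cfg d A → ℝ) (D : ℝ) (hD : ∀ x, |φ x| ≤ D) (n : ℕ) (x y : Cfg d A)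
    (h : ∀ m : Fin d → ℤ, (∀ i, |m i| ≤ (n : ℤ)) → x m = y m) : |φ x - φ y| ≤ varPot φ n := by
  refine le_csSup ⟨2 * D, ?_⟩ ⟨x, y, h, rfl⟩
  rintro _ ⟨x, y, _, rfl⟩
  have h1 := abs_le.1 (hD x)
  have h2 := abs_le.1 (hD y)
  rw [abs_le]
  constructor <;> linarith

theorem varPot_nonneg (φ : Cfg d A → ℝ) (n : ℕ) : 0 ≤ varPot φ n := by
  refine Real.sSup_nonneg ?_
  rintro _ ⟨x, y, _, rfl⟩
  positivity

/-- weight of an insertion at distance `r` -/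
noncomputable def Vw (φ : Cfg d A → ℝ) (D : ℝ) (k r : ℕ) : ℝ :=
  if r ≤ k then 2 * D else varPot φ (r - k)

theorem Vw_sum (φ : Cfg d A → ℝ) (D : ℝ) (hD0 : 0 ≤ D) (k : ℕ)
    (hsum : Summable fun n : ℕ => ((n + 1 : ℕ) : ℝ) ^ (d - 1) * varPot φ (n + 1)) :
    ∑' n : Fin d → ℤ, ENNReal.ofReal (Vw φ D k (supNorm n)) ≠ ∞ := by
  have hV : ∀ r, 0 ≤ Vw φ D k r := by
    intro r
    unfold Vw
    split_ifs
    · linarith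
    · exact varPot_nonneg _ _
  rw [← ENNReal.tsum_fiberwise _ supNorm]
  have e : ∀ r : ℕ, ∑' b : (supNorm ⁻¹' {r} : Set (Fin d → ℤ)),
      ENNReal.ofReal (Vw φ D k (supNorm b.1)) =
        ENNReal.ofReal ((sph d r).card * Vw φ D k r) := by
    intro r
    have : ∀ b : (supNorm ⁻¹' {r} : Set (Fin d → ℤ)),
      ENNReal.ofReal (Vw φ D k (supNorm b.1)) = ENNReal.ofReal (Vw φ D k r) := by
      intro b
      rw [show supNorm b.1 = r from b.2]
    simp_rw [this]
    rw [ENNReal.tsum_set_const, sph_eq, Set.encard_coe_eq_coe_finsetCard,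
      ENNReal.ofReal_mul (by positivity)]
    simp
  simp_rw [e]
  have hs : Summable fun r : ℕ => ((sph d r).card : ℝ) * Vw φ D k r := by
    rw [← summable_nat_add_iff (k + 1)]
    refine Summable.of_nonneg_of_le (fun r => mul_nonneg (by positivity) (hV _)) (fun r => ?_)
      (hsum.mul_left (2 * d * 3 ^ (d - 1) * ((k + 1 : ℕ) : ℝ) ^ (d - 1)))
    have hv : Vw φ D k (r + (k + 1)) = varPot φ (r + 1) := by
      unfold Vw
      rw [if_neg (by omega)]
      congr 1
      omega
    rw [hv]
    have h1 := sph_card d (r + k)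
    have h2 : ((r + k + 1 : ℕ) : ℝ) ^ (d - 1) ≤
        ((k + 1 : ℕ) : ℝ) ^ (d - 1) * ((r + 1 : ℕ) : ℝ) ^ (d - 1) := by
      rw [← mul_pow]
      refine pow_le_pow_left₀ (by positivity) ?_ _
      exact_mod_cast (by nlinarith : r + k + 1 ≤ (k + 1) * (r + 1))
    have h3 : ((sph d (r + (k + 1))).card : ℝ) ≤ 2 * d * 3 ^ (d - 1) *
        (((k + 1 : ℕ) : ℝ) ^ (d - 1) * ((r + 1 : ℕ) : ℝ) ^ (d - 1)) :=
      h1.trans (mul_le_mul_of_nonneg_left h2 (by positivity))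
    have := mul_le_mul_of_nonneg_right h3 (varPot_nonneg φ (r + 1))
    refine this.trans (le_of_eq ?_)
    ring
  rw [← ENNReal.ofReal_tsum_of_nonneg (fun r => mul_nonneg (by positivity) (hV _)) hs]
  exact ENNReal.ofReal_ne_top

theorem ptwise (φ : Cfg d A → ℝ) (D : ℝ) (hD : ∀ x, |φ x| ≤ D) (k : ℕ) [NeZero k]
    (w : Cfg d A) (τ : Fin d → ZMod k) (x : Cfg d A) (ξ : Cfg d Bool) :
    ENNReal.ofReal |φ (Yf k w τ x ξ) - φ x| ≤
      ∑' n : Fin d → ℤ, ENNReal.ofReal (Vw φ D k (supNorm n)) *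
        Set.indicator {ξ : Cfg d Bool | ξ n = true} 1 ξ := by
  by_cases hex : ∃ r, ∃ n, supNorm n = r ∧ ξ n = true
  · obtain ⟨n, hn, hξ⟩ := Nat.find_spec hex
    have hmin : ∀ n', ξ n' = true → supNorm n ≤ supNorm n' := by
      intro n' h'
      rw [hn]
      exact Nat.find_min' hex ⟨n', rfl, h'⟩
    refine le_trans ?_ (ENNReal.le_tsum n)
    rw [Set.indicator_of_mem (by exact hξ)]
    simp only [Pi.one_apply, mul_one]
    refine ENNReal.ofReal_le_ofReal ?_
    unfold Vw
    split_ifs with hk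
    · have h1 := abs_le.1 (hD (Yf k w τ x ξ))
      have h2 := abs_le.1 (hD x)
      rw [abs_le]
      constructor <;> linarith
    · refine varPot_le φ D hD _ _ _ fun m hm => ?_
      unfold Yf
      rw [if_neg]
      intro hc
      have h1 := hmin _ hc
      have h2 : supNorm (anc k τ m) ≤ supNorm n - 1 := by
        unfold supNorm at *
        refine Finset.sup_le fun i _ => ?_
        have h3 := res_bd k τ m i
        have h4 := abs_le.1 (hm i)
        simp only [anc, Pi.sub_apply]
        omega
      omega
  · have : Yf k w τ x ξ = x := by
      funext m
      unfold Yf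
      rw [if_neg]
      intro hc
      exact hex ⟨_, _, rfl, hc⟩
    simp [this]

theorem energy [MeasurableSpace A] [BorelSpace A] (φ : Cfg d A → ℝ) (hφ : Measurable φ)
    (D : ℝ) (hD : ∀ x, |φ x| ≤ D) (k : ℕ) [NeZero k]
    (w : Cfg d A) (τ : Fin d → ZMod k) {ε : ℝ} (h0 : 0 < ε) (h1 : ε < 1)
    (μ : Measure (Cfg d A)) [IsProbabilityMeasure μ]
    (hC : ∑' n : Fin d → ℤ, ENNReal.ofReal (Vw φ D k (supNorm n)) ≠ ∞) :
    ∫ x, φ x ∂μ - ε * (∑' n : Fin d → ℤ, ENNReal.ofReal (Vw φ D k (supNorm n))).toReal ≤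
      ∫ p, φ (Yf k w τ p.1 p.2) ∂(μ.prod (bfield d ε)) := by
  have := bfield_prob d h0 h1
  have := bern_prob h0 h1
  have i1 : Integrable (fun p : Cfg d A × Cfg d Bool => φ (Yf k w τ p.1 p.2))
      (μ.prod (bfield d ε)) :=
    Integrable.of_bound (hφ.comp (measurable_Yf k w τ)).aestronglyMeasurable D
      (Eventually.of_forall fun p => hD _)
  have i2 : Integrable (fun p : Cfg d A × Cfg d Bool => φ p.1) (μ.prod (bfield d ε)) :=
    Integrable.of_bound (hφ.comp measurable_fst).aestronglyMeasurable D
      (Eventually.of_forall fun p => hD _)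
  have e1 : ∫ p, φ p.1 ∂(μ.prod (bfield d ε)) = ∫ x, φ x ∂μ := by
    rw [integral_fun_fst]
    simp
  have e2 : ∫⁻ p : Cfg d A × Cfg d Bool, ENNReal.ofReal |φ (Yf k w τ p.1 p.2) - φ p.1| ∂(μ.prod (bfield d ε)) ≤
      ENNReal.ofReal ε * ∑' n : Fin d → ℤ, ENNReal.ofReal (Vw φ D k (supNorm n)) := by
    refine (lintegral_mono fun p : Cfg d A × Cfg d Bool => ptwise φ D hD k w τ p.1 p.2).trans ?_
    have hm : ∀ n : Fin d → ℤ, MeasurableSet {ξ : Cfg d Bool | ξ n = true} := fun n =>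
      (measurable_pi_apply (X := fun _ : Fin d → ℤ => Bool) n) (measurableSet_singleton true)
    have hmi : ∀ n : Fin d → ℤ, Measurable (fun p : Cfg d A × Cfg d Bool =>
        Set.indicator {ξ : Cfg d Bool | ξ n = true} (1 : Cfg d Bool → ℝ≥0∞) p.2) := fun n =>
      (measurable_one.indicator (hm n)).comp measurable_snd
    rw [lintegral_tsum fun n => ((hmi n).const_mul _).aemeasurable, ← ENNReal.tsum_mul_left]
    refine ENNReal.tsum_le_tsum fun n => ?_
    rw [lintegral_const_mul _ (hmi n), mul_comm]
    refine mul_le_mul_left (le_of_eq ?_) _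
    have hind : ∀ p : Cfg d A × Cfg d Bool,
        Set.indicator {ξ : Cfg d Bool | ξ n = true} (1 : Cfg d Bool → ℝ≥0∞) p.2 =
        Set.indicator (Set.univ ×ˢ {ξ : Cfg d Bool | ξ n = true}) 1 p := by
      intro p
      simp [Set.indicator]
    simp_rw [hind]
    rw [lintegral_indicator_one (MeasurableSet.univ.prod (hm n)), Measure.prod_prod, measure_univ,
      one_mul, ← bern_true]
    exact (measurePreserving_eval_infinitePi (fun _ : Fin d → ℤ => bern ε) n).measure_preimage
      (measurableSet_singleton true).nullMeasurableSet
  have e3 : |∫ p, (φ (Yf k w τ p.1 p.2) - φ p.1) ∂(μ.prod (bfield d ε))| ≤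
      ε * (∑' n : Fin d → ℤ, ENNReal.ofReal (Vw φ D k (supNorm n))).toReal := by
    refine (abs_integral_le_integral_abs).trans ?_
    rw [integral_eq_lintegral_of_nonneg_ae (Eventually.of_forall fun p => abs_nonneg _)
      (by exact (i1.sub i2).abs.aestronglyMeasurable)]
    have := ENNReal.toReal_mono (ENNReal.mul_ne_top ENNReal.ofReal_ne_top hC) e2
    rwa [ENNReal.toReal_mul, ENNReal.toReal_ofReal h0.le] at this
  rw [integral_sub i1 i2, e1] at e3
  have := (abs_le.1 e3).1
  linarith

end

/-- **Theorem 4.1.** If `Σ_{n ≥ 1} n^{d-1} var_n φ < ∞`, then every equilibrium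
state of `φ` is fully supported: every cylinder set has strictly positive measure. -/
theorem statement9 (d : ℕ) (hd : 1 ≤ d) (A : Type) [Fintype A] [TopologicalSpace A]
    [DiscreteTopology A] [MeasurableSpace A] [BorelSpace A]
    (φ : Cfg d A → ℝ) (hφ : Continuous φ)
    (hsum : Summable fun n : ℕ => ((n + 1 : ℕ) : ℝ) ^ (d - 1) * varPot φ (n + 1)) :
    ∀ μ ∈ ES φ 1, ∀ (Λ : Finset (Fin d → ℤ)) (w : (Fin d → ℤ) → A),
      0 < μ { x : Cfg d A | ∀ m ∈ Λ, x m = w m } := by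
  rintro μ ⟨hprob, hinv, heq⟩ Λ w
  by_contra hneg
  have hzero : μ { x : Cfg d A | ∀ m ∈ Λ, x m = w m } = 0 := by simpa using hneg
  have hneA : Nonempty A := ⟨w 0⟩
  obtain ⟨D, hD'⟩ := isCompact_univ.exists_bound_of_continuousOn hφ.continuousOn
  have hD : ∀ x, |φ x| ≤ D := fun x => hD' x (Set.mem_univ x)
  have hD0 : 0 ≤ D := (abs_nonneg _).trans (hD w)
  have hφm : Measurable φ := hφ.measurable
  obtain ⟨k0, hk0⟩ : ∃ k0 : ℕ, ∀ m ∈ Λ, supNorm m ≤ k0 :=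
    ⟨Λ.sup supNorm, fun m hm => Finset.le_sup hm⟩
  let c0 : Fin d → ℤ := fun _ => (k0 : ℤ)
  let k := 2 * k0 + 1
  have hkdef : k = 2 * k0 + 1 := rfl
  have : NeZero k := ⟨by omega⟩
  let w' : Cfg d A := fun r => w (r - c0)
  have hforb : ∀ a : Fin d → ℤ,
      μ {x | ∀ r : Fin d → ℤ, (∀ i, 0 ≤ r i ∧ r i < k) → x (a + r) = w' r} = 0 := by
    intro a
    have hS : MeasurableSet { x : Cfg d A | ∀ m ∈ Λ, x m = w m } := by
      have : { x : Cfg d A | ∀ m ∈ Λ, x m = w m } =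
          (Λ : Set (Fin d → ℤ)).pi fun m => {w m} := by
        ext x; simp [Set.mem_pi]
      rw [this]
      exact MeasurableSet.pi Λ.countable_toSet fun m _ => measurableSet_singleton _
    have h1 : μ (shift (a + c0) ⁻¹' { x : Cfg d A | ∀ m ∈ Λ, x m = w m }) = 0 := by
      rw [← Measure.map_apply (measurable_shift _) hS, hinv]
      exact hzero
    refine measure_mono_null ?_ h1
    intro x hx m hm
    have h2 := (supNorm_le m k0).1 (hk0 m hm)
    rw [Finset.mem_Icc] at h2
    have h3 := hx (c0 + m) (fun i => by
      have h4 := h2.1 i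
      have h5 := h2.2 i
      simp only [c0, Pi.add_apply, hkdef] at h4 h5 ⊢
      push_cast
      constructor <;> linarith)
    simp only [w', add_sub_cancel_left] at h3
    rw [← h3, ← add_assoc]
    rfl
  have hC := Vw_sum φ D hD0 k hsum
  set C : ℝ := (∑' n : Fin d → ℤ, ENNReal.ofReal (Vw φ D k (supNorm n))).toReal with hCdef
  have hC0 : 0 ≤ C := ENNReal.toReal_nonneg
  have hkpos : (0 : ℝ) < k := by exact_mod_cast Nat.pos_of_ne_zero (NeZero.ne k)
  set c : ℝ := ((2 * k : ℝ) ^ d)⁻¹ with hc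
  have hcpos : 0 < c := by positivity
  have hA1 : (1 : ℝ) ≤ Fintype.card A := by exact_mod_cast Fintype.card_pos
  have hlog : 0 ≤ Real.log (Fintype.card A) := Real.log_nonneg hA1
  set L : ℝ := (Real.log (Fintype.card A) + C) / c + 1 with hL
  have hLpos : 0 < L := by positivity
  set ε : ℝ := Real.exp (-L) with hε
  have h0 : 0 < ε := Real.exp_pos _
  have h1 : ε < 1 := by rw [hε, Real.exp_lt_one_iff]; linarith
  have hnm : Real.negMulLog ε = ε * L := by
    rw [Real.negMulLog, hε, Real.log_exp]; ring
  have hcL : c * L = Real.log (Fintype.card A) + C + c := by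
    rw [hL]; field_simp
  set ν := pert k w' ε μ with hν
  have hνp : IsProbabilityMeasure ν := pert_prob k w' μ h0 h1
  have hνi : Invariant ν := pert_inv k w' μ h0 h1 hinv
  have hbdd : ∀ η : Measure (Cfg d A), IsProbabilityMeasure η →
      BddBelow (Set.range fun n : {n : ℕ // 1 ≤ n} => ((n.1 : ℝ) ^ d)⁻¹ *
        ∑ w : (Fin d → Fin n.1) → A, Real.negMulLog (η (cylE n.1 w)).toReal) := by
    intro η hη
    refine ⟨0, ?_⟩
    rintro _ ⟨n, rfl⟩
    refine mul_nonneg (by positivity) (Finset.sum_nonneg fun y _ => ?_)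
    refine Real.negMulLog_nonneg ENNReal.toReal_nonneg ?_
    have := ENNReal.toReal_mono ENNReal.one_ne_top (prob_le_one (μ := η) (s := cylE n.1 y))
    simpa using this
  -- entropy bound
  have hent : entropy μ + c * Real.negMulLog ε - ε * Real.log (Fintype.card A) ≤ entropy ν := by
    have : Nonempty {n : ℕ // 1 ≤ n} := ⟨⟨1, le_rfl⟩⟩
    refine le_ciInf ?_
    rintro ⟨m, hm⟩
    have hmpos : (0 : ℝ) < (m : ℝ) ^ d := by
      have : (0:ℝ) < m := by exact_mod_cast hm
      positivity
    have hn1 : 1 ≤ 2 * k * m := by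
      have : 0 < 2 * k * m := by positivity
      exact this
    have a1 := ciInf_le (hbdd μ hprob) ⟨2 * k * m, hn1⟩
    have a2 := pert_block k w' m h0 h1 μ hforb
    have a3 := ent_subadd (2 * k) m ν hνi
    have a4 : ((2 * k * m : ℕ) : ℝ) ^ d = (2 * k : ℝ) ^ d * (m : ℝ) ^ d := by
      push_cast; rw [mul_pow]
    change entropy μ ≤ (((2 * k * m : ℕ) : ℝ) ^ d)⁻¹ * _ at a1
    have hX : (0 : ℝ) < (2 * k : ℝ) ^ d := by positivity
    rw [a4, le_inv_mul_iff₀ (by positivity)] at a1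
    rw [a4] at a2
    rw [show ((2 * k : ℕ) : ℝ) = 2 * (k : ℝ) by push_cast; ring] at a3
    show _ ≤ ((m : ℝ) ^ d)⁻¹ * _
    rw [le_inv_mul_iff₀ hmpos]
    refine le_of_mul_le_mul_left ?_ hX
    have hXc : (2 * k : ℝ) ^ d * c = 1 := mul_inv_cancel₀ hX.ne'
    have a5 : (2 * k : ℝ) ^ d * (m : ℝ) ^ d * entropy μ ≤
        ∑ x, Real.negMulLog (μ (cylE (2 * k * m) x)).toReal := a1
    have a6 : (2 * k : ℝ) ^ d * ((m : ℝ) ^ d *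
        (entropy μ + c * Real.negMulLog ε - ε * Real.log (Fintype.card A))) =
        (m : ℝ) ^ d * Real.negMulLog ε + (2 * k : ℝ) ^ d * (m : ℝ) ^ d * entropy μ
        - ε * ((2 * k : ℝ) ^ d * (m : ℝ) ^ d) * Real.log (Fintype.card A) := by
      linear_combination ((m : ℝ) ^ d * Real.negMulLog ε) * hXc
    rw [a6]
    refine le_trans ?_ (a2.trans a3)
    linarith
  have hint : ∫ x, φ x ∂μ - ε * C ≤ ∫ x, φ x ∂ν := by
    rw [hν, pert_integral k w' μ h0 h1 φ hφm D hD]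
    have hK : (Fintype.card (Fin d → ZMod k) : ℝ) ≠ 0 := by exact_mod_cast Fintype.card_ne_zero
    have hK1 : ∑ _τ : Fin d → ZMod k, (Fintype.card (Fin d → ZMod k) : ℝ)⁻¹ = 1 := by
      rw [Finset.sum_const, Finset.card_univ, nsmul_eq_mul, mul_inv_cancel₀ hK]
    have := Finset.sum_le_sum (s := Finset.univ) fun τ (_ : τ ∈ Finset.univ) =>
      mul_le_mul_of_nonneg_left (energy φ hφm D hD k w' τ h0 h1 μ hC)
        (show 0 ≤ (Fintype.card (Fin d → ZMod k) : ℝ)⁻¹ by positivity)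
    refine le_trans (le_of_eq ?_) this
    rw [← Finset.sum_mul, hK1, one_mul]
  have hpress : entropy ν + 1 * ∫ x, φ x ∂ν ≤ pressure φ 1 := by
    refine le_csSup ⟨Real.log (Fintype.card ((Fin d → Fin 1) → A)) + D, ?_⟩ ⟨ν, hνp, hνi, rfl⟩
    rintro _ ⟨η, hη, _, rfl⟩
    have b1 := ciInf_le (hbdd η hη) ⟨1, le_rfl⟩
    have b2 := fiber Finset.univ (fun y => (η (cylE 1 y)).toReal)
      (fun y => ENNReal.toReal_nonneg) _ (le_of_eq Finset.card_univ)
    rw [cyl_sum 1 η] at b2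
    have b3 : ∫ x, φ x ∂η ≤ D := by
      have := norm_integral_le_of_norm_le_const (μ := η) (f := φ) (C := D)
        (Eventually.of_forall hD)
      simp only [probReal_univ, mul_one] at this
      exact (le_abs_self _).trans this
    have b4 : entropy η ≤ ∑ y, Real.negMulLog (η (cylE 1 y)).toReal := by
      refine b1.trans (le_of_eq ?_)
      show (((1 : ℕ) : ℝ) ^ d)⁻¹ * _ = _
      rw [Nat.cast_one, one_pow, inv_one, one_mul]
    simp only [Real.negMulLog_one, zero_add, one_mul] at b2
    linarith
  rw [← heq, one_mul, one_mul] at hpress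
  rw [hnm] at hent
  have hfin : c * (ε * L) = ε * (Real.log (Fintype.card A) + C + c) := by
    rw [← hcL]; ring
  rw [hfin] at hent
  have : 0 < ε * c := by positivity
  nlinarith

end Freezing
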